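/- Let n ≥ 2, λ = (n−1)/2, j ≥ 1, let φ_j(t) = 2^{−nj/2} Σ_{l=0}^{2^{j−1}−1} ((l+λ)/λ) C_l^λ(t), and fix x₀ ∈ S^n. Among all functions f on S^n that are restrictions to S^n of real polynomials on ℝ^{n+1} of total degree at most 2^{j−1}−1 and satisfy f(x₀) = 1, the minimal L²-norm ‖f‖ = ((1/Σ_n)∫_{S^n} |f(y)|² dσ(y))^{1/2} is attained by the normalized scaling function f = φ_j(⟨x₀,·⟩)/φ_j(1), and this minimal value equals ‖φ_j(⟨x₀,·⟩)‖ / φ_j(1). -/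

import Mathlib

open Real Finset MeasureTheory Metric
open scoped RealInnerProductSpace

/-- The Gegenbauer polynomials `C_l^λ`, defined by `C_0^λ(t) = 1`, `C_1^λ(t) = 2λt` and the
recurrence `(l+1) C_{l+1}^λ(t) = 2(l+λ) t C_l^λ(t) − (l+2λ−1) C_{l−1}^λ(t)` for `l ≥ 1`. -/
noncomputable def gegenbauer (lam : ℝ) : ℕ → ℝ → ℝ
  | 0 => fun _ => 1
  | 1 => fun t => 2 * lam * t
  | (l + 2) => fun t =>
      (2 * ((l : ℝ) + 1 + lam) * t * gegenbauer lam (l + 1) t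
        - ((l : ℝ) + 2 * lam) * gegenbauer lam l t) / ((l : ℝ) + 2)

/-- The weighted scaling function of level `j` on the `n`-sphere, as a zonal function:
`φ_j(t) = 2^{−nj/2} Σ_{l=0}^{2^{j−1}−1} ((l+λ)/λ) C_l^λ(t)` with `λ = (n−1)/2`. -/
noncomputable def scalingFn (n j : ℕ) : ℝ → ℝ :=
  fun t => (2 : ℝ) ^ (-((n * j : ℕ) : ℝ) / 2) *
    ∑ l ∈ Finset.range (2 ^ (j - 1)),
      (((l : ℝ) + ((n : ℝ) - 1) / 2) / (((n : ℝ) - 1) / 2)) *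
        gegenbauer (((n : ℝ) - 1) / 2) l t

/-!
Gaussian integration by parts in Cartesian coordinates, compared with polar coordinates, shows that
the rotation fields `X_i ∂_j - X_j ∂_i` integrate to zero over the sphere. Hence integrating a
polynomial in the single coordinate `⟨x₀, ·⟩` obeys the integration-by-parts rule of the Gegenbauer
weight, and off-axis monomials reduce to axial ones. Since the Gegenbauer polynomials are orthogonal
for that weight, the Christoffel–Darboux formula makes `φ_j(⟨x₀, ·⟩)` a multiple of the reproducing
kernel: its inner product with a polynomial `f` of degree at most `2^(j-1) - 1` is a constant
multiple of `f(x₀)`. So every competitor `f` with `f(x₀) = 1` has the same inner product with the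
normalized scaling function `g` as `g` itself, and `‖f‖² = ‖g‖² + ‖f - g‖²`.
-/

section GegenbauerPolynomials

open Polynomial

/-- The Gegenbauer polynomial `C_l^λ` as an element of `ℝ[X]`, so that it can be differentiated and
fed to linear functionals algebraically; its evaluation is `gegenbauer`. -/
noncomputable def gegenbauerPoly (lam : ℝ) : ℕ → ℝ[X]
  | 0 => 1
  | 1 => C (2 * lam) * X
  | l + 2 => C ((l + 2 : ℝ)⁻¹) * (C (2 * (l + 1 + lam)) * X * gegenbauerPoly lam (l + 1) -
      C (l + 2 * lam) * gegenbauerPoly lam l)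

lemma eval_gegenbauerPoly (lam t : ℝ) (l : ℕ) :
    (gegenbauerPoly lam l).eval t = gegenbauer lam l t := by
  induction l using Nat.twoStepInduction with
  | zero => simp [gegenbauerPoly, gegenbauer]
  | one => simp [gegenbauerPoly, gegenbauer]
  | more l ih₀ ih₁ =>
    simp only [gegenbauerPoly, gegenbauer, eval_mul, eval_sub, eval_C, eval_X, ih₀, ih₁]
    ring

lemma gegenbauerPoly_add_two (lam : ℝ) (l : ℕ) :
    ((l : ℝ[X]) + 2) * gegenbauerPoly lam (l + 2) =
      2 * ((l : ℝ[X]) + 1 + C lam) * X * gegenbauerPoly lam (l + 1) -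
        ((l : ℝ[X]) + 2 * C lam) * gegenbauerPoly lam l := by
  have inv_cancel : ((l : ℝ[X]) + 2) * C ((l + 2 : ℝ)⁻¹) = 1 := by
    have : ((l : ℝ[X]) + 2) = C (l + 2 : ℝ) := by simp only [map_add, map_natCast, map_ofNat]
    rw [this, ← C_mul, mul_inv_cancel₀ (by positivity), C_1]
  simp only [gegenbauerPoly, map_add, map_mul, map_natCast, map_ofNat, map_one]
  linear_combination (2 * ((l : ℝ[X]) + 1 + C lam) * X * gegenbauerPoly lam (l + 1) -
    ((l : ℝ[X]) + 2 * C lam) * gegenbauerPoly lam l) * inv_cancel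

lemma natDegree_gegenbauerPoly_le (lam : ℝ) (l : ℕ) : (gegenbauerPoly lam l).natDegree ≤ l := by
  induction l using Nat.twoStepInduction with
  | zero => simp only [gegenbauerPoly, natDegree_one, le_refl]
  | one => exact (natDegree_C_mul_le _ _).trans natDegree_X_le
  | more l ih₀ ih₁ =>
    have h : (X * gegenbauerPoly lam (l + 1)).natDegree ≤ 1 + (l + 1) :=
      natDegree_mul_le_of_le natDegree_X_le ih₁
    simp only [gegenbauerPoly, mul_assoc]
    refine (natDegree_C_mul_le _ _).trans (natDegree_sub_le_of_le ?_ ?_ |>.trans (max_self _).le)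
    · exact (natDegree_C_mul_le _ _).trans (by omega)
    · exact (natDegree_C_mul_le _ _).trans (by omega)

/-- The two classical derivative relations are proved together because each feeds the induction
step of the other. -/
lemma derivative_gegenbauerPoly_relations (lam : ℝ) (l : ℕ) :
    derivative (gegenbauerPoly lam (l + 1)) =
        X * derivative (gegenbauerPoly lam l) + ((l : ℝ[X]) + 2 * C lam) * gegenbauerPoly lam l ∧
      X * derivative (gegenbauerPoly lam (l + 1)) - derivative (gegenbauerPoly lam l) =
        ((l : ℝ[X]) + 1) * gegenbauerPoly lam (l + 1) := by
  induction l with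
  | zero => simp [gegenbauerPoly, map_ofNat C, mul_comm]
  | succ l ih =>
    obtain ⟨raise, lower⟩ := ih
    have recurrence := gegenbauerPoly_add_two lam l
    have recurrence' := congrArg derivative recurrence
    simp only [derivative_mul, derivative_sub, derivative_add, derivative_natCast, derivative_X,
      derivative_C, derivative_ofNat, derivative_one] at recurrence'
    have raise' : derivative (gegenbauerPoly lam (l + 2)) =
        X * derivative (gegenbauerPoly lam (l + 1)) +
          ((l : ℝ[X]) + 1 + 2 * C lam) * gegenbauerPoly lam (l + 1) := by
      have two_add_ne_zero : (l : ℝ[X]) + 2 ≠ 0 := by exact_mod_cast (l + 1).succ_ne_zero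
      refine mul_left_cancel₀ two_add_ne_zero ?_
      linear_combination recurrence' + ((l : ℝ[X]) + 2 * C lam) * lower
    push_cast
    exact ⟨raise', by linear_combination X * raise' - recurrence + X * lower - raise⟩

lemma one_sub_X_sq_mul_derivative_gegenbauerPoly (lam : ℝ) (l : ℕ) :
    (1 - X ^ 2) * derivative (gegenbauerPoly lam (l + 1)) =
      ((l : ℝ[X]) + 2 * C lam) * gegenbauerPoly lam l -
        ((l : ℝ[X]) + 1) * X * gegenbauerPoly lam (l + 1) := by
  obtain ⟨raise, lower⟩ := derivative_gegenbauerPoly_relations lam l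
  linear_combination raise - X * lower

theorem gegenbauerPoly_differential_equation (lam : ℝ) (l : ℕ) :
    (1 - X ^ 2) * derivative (derivative (gegenbauerPoly lam l)) =
      (2 * C lam + 1) * X * derivative (gegenbauerPoly lam l) -
        (l : ℝ[X]) * ((l : ℝ[X]) + 2 * C lam) * gegenbauerPoly lam l := by
  cases l with
  | zero => simp [gegenbauerPoly]
  | succ l =>
    have lower := (derivative_gegenbauerPoly_relations lam l).2
    have h := congrArg derivative (one_sub_X_sq_mul_derivative_gegenbauerPoly lam l)
    simp only [derivative_mul, derivative_sub, derivative_add, derivative_natCast, derivative_X,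
      derivative_C, derivative_ofNat, derivative_one, derivative_X_sq, map_ofNat] at h
    push_cast at h ⊢
    linear_combination h - ((l : ℝ[X]) + 2 * C lam) * lower

lemma eval_one_gegenbauerPoly_pos {lam : ℝ} (hlam : 0 < lam) (l : ℕ) :
    0 < (gegenbauerPoly lam l).eval 1 := by
  induction l with
  | zero => simp [gegenbauerPoly]
  | succ l ih =>
    have h := congrArg (eval 1) (one_sub_X_sq_mul_derivative_gegenbauerPoly lam l)
    simp only [eval_mul, eval_sub, eval_one, eval_pow, eval_X, eval_add, eval_natCast, eval_ofNat,
      eval_C] at h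
    refine pos_of_mul_pos_right (a := (l + 1 : ℝ)) ?_ (by positivity)
    calc (0 : ℝ) < (l + 2 * lam) * (gegenbauerPoly lam l).eval 1 := by positivity
      _ = (l + 1 : ℝ) * (gegenbauerPoly lam (l + 1)).eval 1 := by linear_combination -h

/-- The zonal kernel `∑_{l < N} ((l + λ) / λ) C_l^λ`, of which the scaling functions are rescaled
instances: up to a constant, the reproducing kernel of the spherical polynomials of degree
less than `N`. -/
noncomputable def gegenbauerKernel (lam : ℝ) (N : ℕ) : ℝ[X] :=
  ∑ l ∈ Finset.range N, C ((l + lam) / lam) * gegenbauerPoly lam l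

lemma eval_gegenbauerKernel (lam t : ℝ) (N : ℕ) : (gegenbauerKernel lam N).eval t =
    ∑ l ∈ Finset.range N, (l + lam) / lam * gegenbauer lam l t := by
  simp only [gegenbauerKernel, eval_finsetSum, eval_mul, eval_C, eval_gegenbauerPoly]

lemma natDegree_gegenbauerKernel_le (lam : ℝ) (N : ℕ) :
    (gegenbauerKernel lam N).natDegree ≤ N - 1 :=
  natDegree_sum_le_of_forall_le _ _ fun l hl =>
    (natDegree_C_mul_le _ _).trans <|
      (natDegree_gegenbauerPoly_le lam l).trans <| Nat.le_sub_one_of_lt (Finset.mem_range.1 hl)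

lemma eval_one_gegenbauerKernel_pos {lam : ℝ} (hlam : 0 < lam) {N : ℕ} (hN : N ≠ 0) :
    0 < (gegenbauerKernel lam N).eval 1 := by
  rw [gegenbauerKernel, eval_finsetSum]
  refine Finset.sum_pos (fun l _ => ?_) (Finset.nonempty_range_iff.2 hN)
  rw [eval_mul, eval_C]
  exact mul_pos (by positivity) (eval_one_gegenbauerPoly_pos hlam l)

theorem gegenbauerKernel_christoffel_darboux {lam : ℝ} (hlam : lam ≠ 0) (N : ℕ) :
    2 * C lam * (X - 1) * gegenbauerKernel lam (N + 1) =
      ((N : ℝ[X]) + 1) * gegenbauerPoly lam (N + 1) -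
        ((N : ℝ[X]) + 2 * C lam) * gegenbauerPoly lam N := by
  have weight (l : ℕ) : C lam * C ((l + lam) / lam) = (l : ℝ[X]) + C lam := by
    rw [← C_mul, mul_div_cancel₀ _ hlam, map_add, map_natCast]
  induction N with
  | zero =>
    have weight_zero := weight 0
    simp only [gegenbauerKernel, Finset.sum_range_one, gegenbauerPoly, map_mul, map_ofNat,
      Nat.cast_zero, zero_add] at weight_zero ⊢
    linear_combination 2 * (X - 1) * weight_zero
  | succ N ih =>
    rw [gegenbauerKernel, Finset.sum_range_succ, ← gegenbauerKernel]
    have weight_succ := weight (N + 1)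
    push_cast at weight_succ ⊢
    linear_combination ih + 2 * (X - 1) * gegenbauerPoly lam (N + 1) * weight_succ -
      gegenbauerPoly_add_two lam N

end GegenbauerPolynomials

section GegenbauerFunctionals

open Polynomial

lemma linearMap_C_mul {R : Type*} [CommSemiring R] (L : R[X] →ₗ[R] R) (a : R) (p : R[X]) :
    L (C a * p) = a * L p := by
  rw [← smul_eq_C_mul, map_smul, smul_eq_mul]

/-- A linear functional `L` on `ℝ[X]` behaving like integration over `[-1, 1]` against the
Gegenbauer weight `(1 - t²)^(λ - 1/2)`, expressed through integration by parts; for `λ > -1/2` this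
determines `L` up to a scalar. -/
def IsGegenbauerFunctional (lam : ℝ) (L : ℝ[X] →ₗ[ℝ] ℝ) : Prop :=
  ∀ g : ℝ[X], L ((1 - X ^ 2) * derivative g) = (2 * lam + 1) * L (X * g)

namespace IsGegenbauerFunctional

variable {lam : ℝ} {L : ℝ[X] →ₗ[ℝ] ℝ}

lemma apply_gegenbauerPoly (hL : IsGegenbauerFunctional lam L) (hlam : 0 ≤ lam) {l : ℕ}
    (hl : l ≠ 0) : L (gegenbauerPoly lam l) = 0 := by
  have ode : C (l * (l + 2 * lam)) * gegenbauerPoly lam l =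
      C (2 * lam + 1) * (X * derivative (gegenbauerPoly lam l)) -
        (1 - X ^ 2) * derivative (derivative (gegenbauerPoly lam l)) := by
    simp only [map_add, map_mul, map_natCast, map_ofNat, map_one]
    linear_combination gegenbauerPoly_differential_equation lam l
  have h := congrArg L ode
  rw [linearMap_C_mul, map_sub, linearMap_C_mul, hL, sub_self] at h
  exact (mul_eq_zero.1 h).resolve_left (by positivity)

lemma apply_gegenbauerPoly_mul_X_pow (hL : IsGegenbauerFunctional lam L) (hlam : 0 ≤ lam)
    {m l : ℕ} (h : m < l) : L (gegenbauerPoly lam l * X ^ m) = 0 := by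
  induction m generalizing l with
  | zero => simpa using hL.apply_gegenbauerPoly hlam (Nat.ne_zero_of_lt h)
  | succ m ih =>
    obtain ⟨l, rfl⟩ : ∃ k, l = k + 1 := ⟨l - 1, by omega⟩
    have recurrence : C (2 * (l + 1 + lam)) * (gegenbauerPoly lam (l + 1) * X ^ (m + 1)) =
        C (l + 2 : ℝ) * (gegenbauerPoly lam (l + 2) * X ^ m) +
          C (l + 2 * lam) * (gegenbauerPoly lam l * X ^ m) := by
      simp only [map_add, map_mul, map_natCast, map_ofNat, map_one]
      linear_combination -X ^ m * gegenbauerPoly_add_two lam l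
    have h' := congrArg L recurrence
    rw [map_add, linearMap_C_mul, linearMap_C_mul, linearMap_C_mul, ih (by omega), ih (by omega),
      mul_zero, mul_zero, add_zero] at h'
    exact (mul_eq_zero.1 h').resolve_left (by positivity)

theorem apply_gegenbauerPoly_mul (hL : IsGegenbauerFunctional lam L) (hlam : 0 ≤ lam) {l : ℕ}
    {q : ℝ[X]} (hq : q.natDegree < l) : L (gegenbauerPoly lam l * q) = 0 := by
  rw [q.as_sum_range_C_mul_X_pow, Finset.mul_sum, map_sum]
  refine Finset.sum_eq_zero fun m hm => ?_
  rw [mul_left_comm, linearMap_C_mul, hL.apply_gegenbauerPoly_mul_X_pow hlam, mul_zero]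
  exact (Finset.mem_range_succ_iff.1 hm).trans_lt hq

/-- By the Christoffel–Darboux formula `(X - 1) * K` is a combination of two Gegenbauer polynomials,
so it is orthogonal to `(q - q(1)) / (X - 1)`. -/
theorem apply_gegenbauerKernel_mul (hL : IsGegenbauerFunctional lam L) (hlam : 0 < lam) {N : ℕ}
    {q : ℝ[X]} (hq : q.natDegree < N) :
    L (gegenbauerKernel lam N * q) = q.eval 1 * L (gegenbauerKernel lam N) := by
  obtain ⟨N, rfl⟩ : ∃ k, N = k + 1 := ⟨N - 1, by omega⟩
  obtain ⟨v, hv⟩ : X - C 1 ∣ q - C (q.eval 1) := X_sub_C_dvd_sub_C_eval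
  suffices orthogonal : L ((X - 1) * gegenbauerKernel lam (N + 1) * v) = 0 by
    have split : gegenbauerKernel lam (N + 1) * q = C (q.eval 1) * gegenbauerKernel lam (N + 1) +
        (X - 1) * gegenbauerKernel lam (N + 1) * v := by
      rw [C_1] at hv
      linear_combination gegenbauerKernel lam (N + 1) * hv
    rw [split, map_add, linearMap_C_mul, orthogonal, add_zero]
  rcases eq_or_ne v 0 with rfl | hv0
  · rw [mul_zero, map_zero]
  have hv_deg : v.natDegree < N := by
    have := congrArg natDegree hv
    rw [natDegree_sub_C, (monic_X_sub_C 1).natDegree_mul' hv0, natDegree_X_sub_C] at this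
    omega
  have christoffel_darboux : C (2 * lam) * ((X - 1) * gegenbauerKernel lam (N + 1) * v) =
      C (N + 1 : ℝ) * (gegenbauerPoly lam (N + 1) * v) -
        C (N + 2 * lam) * (gegenbauerPoly lam N * v) := by
    simp only [map_add, map_mul, map_natCast, map_ofNat, map_one]
    linear_combination v * gegenbauerKernel_christoffel_darboux hlam.ne' N
  have h := congrArg L christoffel_darboux
  rw [map_sub, linearMap_C_mul, linearMap_C_mul, linearMap_C_mul,
    hL.apply_gegenbauerPoly_mul hlam.le hv_deg,
    hL.apply_gegenbauerPoly_mul hlam.le (hv_deg.trans N.lt_succ_self), mul_zero, mul_zero,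
    sub_zero] at h
  exact (mul_eq_zero.1 h).resolve_left (by positivity)

end IsGegenbauerFunctional

end GegenbauerFunctionals

section PolarCoordinates

variable {E : Type*} [NormedAddCommGroup E] [NormedSpace ℝ E] [FiniteDimensional ℝ E]
  [MeasurableSpace E] [BorelSpace E] (μ : Measure E) [μ.IsAddHaarMeasure]

lemma integral_volumeIoiPow (n : ℕ) (g : ℝ → ℝ) :
    ∫ r : Set.Ioi (0 : ℝ), g r ∂(.volumeIoiPow n) = ∫ r in Set.Ioi 0, r ^ n * g r := by
  simp only [Measure.volumeIoiPow, ENNReal.ofReal]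
  rw [integral_withDensity_eq_integral_smul
      (measurable_subtype_coe.pow_const n).real_toNNReal,
    integral_subtype_comap measurableSet_Ioi fun r => Real.toNNReal (r ^ n) • g r]
  refine setIntegral_congr_fun measurableSet_Ioi fun r hr => ?_
  rw [NNReal.smul_def, Real.coe_toNNReal _ (pow_nonneg (le_of_lt hr) n), smul_eq_mul]

theorem integral_fun_normalize_mul_fun_norm [Nontrivial E] (F : E → ℝ) (g : ℝ → ℝ) :
    ∫ y, F (‖y‖⁻¹ • y) * g ‖y‖ ∂μ =
      (∫ y : sphere (0 : E) 1, F y ∂μ.toSphere) *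
        ∫ r in Set.Ioi 0, r ^ (Module.finrank ℝ E - 1) * g r :=
  calc ∫ y, F (‖y‖⁻¹ • y) * g ‖y‖ ∂μ
    _ = ∫ y : ({0}ᶜ : Set E), F (‖y.1‖⁻¹ • y.1) * g ‖y.1‖ ∂(μ.comap (↑)) := by
      rw [integral_subtype_comap (measurableSet_singleton _).compl
        fun y : E => F (‖y‖⁻¹ • y) * g ‖y‖, restrict_compl_singleton]
    _ = ∫ z : sphere (0 : E) 1 × Set.Ioi (0 : ℝ), F z.1 * g z.2
          ∂μ.toSphere.prod (.volumeIoiPow (Module.finrank ℝ E - 1)) := by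
      rw [← μ.measurePreserving_homeomorphUnitSphereProd.integral_comp
        (Homeomorph.measurableEmbedding _)]
      simp only [homeomorphUnitSphereProd_apply_fst_coe, homeomorphUnitSphereProd_apply_snd_coe]
    _ = (∫ y : sphere (0 : E) 1, F y ∂μ.toSphere) *
          ∫ r : Set.Ioi (0 : ℝ), g r ∂(.volumeIoiPow (Module.finrank ℝ E - 1)) :=
      integral_prod_mul (fun y : sphere (0 : E) 1 => F y) fun r : Set.Ioi (0 : ℝ) => g r
    _ = _ := by rw [integral_volumeIoiPow]

theorem integral_homogeneous_mul_fun_norm [Nontrivial E] {F : E → ℝ} {k : ℕ}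
    (hF : ∀ (r : ℝ) (y : E), F (r • y) = r ^ k * F y) (g : ℝ → ℝ) :
    ∫ y, F y * g ‖y‖ ∂μ =
      (∫ y : sphere (0 : E) 1, F y ∂μ.toSphere) *
        ∫ r in Set.Ioi 0, r ^ (Module.finrank ℝ E - 1 + k) * g r := by
  have hF_normalize (y : E) : F y = F (‖y‖⁻¹ • y) * ‖y‖ ^ k := by
    rcases eq_or_ne y 0 with rfl | hy
    · simpa [mul_comm] using hF 0 0
    · rw [mul_comm, ← hF, smul_inv_smul₀ (norm_ne_zero_iff.2 hy)]
  simp only [pow_add, mul_assoc]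
  rw [← integral_fun_normalize_mul_fun_norm μ F fun r => r ^ k * g r]
  refine integral_congr_ae (.of_forall fun y => ?_)
  simp only [← mul_assoc, ← hF_normalize]

lemma integrable_toSphere_of_continuous {f : sphere (0 : E) 1 → ℝ} (hf : Continuous f) :
    Integrable f μ.toSphere :=
  hf.integrable_of_hasCompactSupport (HasCompactSupport.of_compactSpace f)

end PolarCoordinates

section GaussianMoments

/-- The moments of the weight `exp (-t²)` on the real line. -/
noncomputable def gaussianMoment (k : ℕ) : ℝ := ∫ t : ℝ, t ^ k * exp (-t ^ 2)

lemma integrable_pow_mul_exp_neg_sq (k : ℕ) : Integrable fun t : ℝ => t ^ k * exp (-t ^ 2) := by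
  simpa using integrable_rpow_mul_exp_neg_mul_sq one_pos (s := k)
    (by linarith [k.cast_nonneg (α := ℝ)])

/-- At `k = 0` the truncated exponent `k - 1` is harmless because of the factor `k`. -/
lemma two_mul_gaussianMoment_succ (k : ℕ) :
    2 * gaussianMoment (k + 1) = k * gaussianMoment (k - 1) := by
  have hasDerivAt (t : ℝ) : HasDerivAt (fun t => t ^ k * exp (-t ^ 2))
      (k * (t ^ (k - 1) * exp (-t ^ 2)) - 2 * (t ^ (k + 1) * exp (-t ^ 2))) t := by
    refine ((hasDerivAt_pow k t).mul (hasDerivAt_pow 2 t).fun_neg.exp).congr_deriv ?_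
    push_cast
    ring
  have h_low := (integrable_pow_mul_exp_neg_sq (k - 1)).const_mul k
  have h_high := (integrable_pow_mul_exp_neg_sq (k + 1)).const_mul 2
  have h := integral_eq_zero_of_hasDerivAt_of_integrable hasDerivAt (h_low.sub h_high)
    (integrable_pow_mul_exp_neg_sq k)
  rw [integral_sub h_low h_high, integral_const_mul, integral_const_mul] at h
  exact (sub_eq_zero.1 h).symm

lemma integral_Ioi_pow_mul_exp_neg_sq_pos (k : ℕ) :
    0 < ∫ r in Set.Ioi (0 : ℝ), r ^ k * exp (-r ^ 2) := by
  have h := integral_rpow_mul_exp_neg_rpow (p := 2) (q := k) two_pos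
    (by linarith [k.cast_nonneg (α := ℝ)])
  norm_cast at h
  rw [h]
  have := Real.Gamma_pos_of_pos (s := (k + 1) / 2) (by positivity)
  positivity

lemma two_mul_prod_gaussianMoment_add_single {ι : Type*} [Fintype ι] (α : ι →₀ ℕ) (i : ι) :
    2 * ∏ k, gaussianMoment ((α + Finsupp.single i 1 : ι →₀ ℕ) k) =
      α i * ∏ k, gaussianMoment ((α - Finsupp.single i 1 : ι →₀ ℕ) k) := by
  classical
  rw [← Finset.mul_prod_erase univ _ (Finset.mem_univ i),
    ← Finset.mul_prod_erase univ (fun k => gaussianMoment ((α - Finsupp.single i 1 : ι →₀ ℕ) k))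
      (Finset.mem_univ i)]
  have off_i (k : ι) (hk : k ∈ univ.erase i) :
      gaussianMoment ((α + Finsupp.single i 1 : ι →₀ ℕ) k) =
        gaussianMoment ((α - Finsupp.single i 1 : ι →₀ ℕ) k) := by
    simp [(Finset.ne_of_mem_erase hk).symm]
  rw [Finset.prod_congr rfl off_i, ← mul_assoc, ← mul_assoc, Finsupp.add_apply,
    Finsupp.tsub_apply, Finsupp.single_eq_same, two_mul_gaussianMoment_succ]

end GaussianMoments

section SphereIntegral

variable {E : Type*} [NormedAddCommGroup E] [InnerProductSpace ℝ E] [FiniteDimensional ℝ E]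
  [MeasurableSpace E] [BorelSpace E] {ι : Type*} [Fintype ι] (b : OrthonormalBasis ι ℝ E)

lemma integral_prod_repr (f : ι → ℝ → ℝ) :
    ∫ y : E, ∏ i, f i (b.repr y i) = ∏ i, ∫ t, f i t := by
  rw [← integral_fintype_prod_volume_eq_prod,
    ← (EuclideanSpace.volume_preserving_symm_measurableEquiv_toLp ι).integral_comp',
    ← b.measurePreserving_repr.integral_comp' (f := b.measurableEquiv)]
  rfl

lemma integral_prod_repr_pow_mul_exp_neg_norm_sq (α : ι → ℕ) :
    ∫ y : E, (∏ i, b.repr y i ^ α i) * exp (-‖y‖ ^ 2) = ∏ i, gaussianMoment (α i) := by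
  simp only [gaussianMoment]
  rw [← integral_prod_repr b fun i t => t ^ α i * exp (-t ^ 2)]
  refine integral_congr_ae (.of_forall fun y => ?_)
  simp only [Finset.prod_mul_distrib, ← Real.exp_sum, Finset.sum_neg_distrib]
  rw [← b.repr.norm_map y, EuclideanSpace.real_norm_sq_eq]

open MvPolynomial

lemma integrable_eval_repr (p : MvPolynomial ι ℝ) :
    Integrable (fun y : sphere (0 : E) 1 => eval (b.repr (y : E)) p)
      (volume : Measure E).toSphere := by
  refine integrable_toSphere_of_continuous _ (p.continuous_eval.comp ?_)
  fun_prop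

/-- Integration over the unit sphere of a polynomial in the coordinates of an orthonormal basis. -/
noncomputable def sphereIntegral : MvPolynomial ι ℝ →ₗ[ℝ] ℝ where
  toFun p := ∫ y : sphere (0 : E) 1, eval (b.repr (y : E)) p ∂(volume : Measure E).toSphere
  map_add' p q := by
    simp only [map_add]
    exact integral_add (integrable_eval_repr b p) (integrable_eval_repr b q)
  map_smul' a p := by simp only [smul_eval, integral_const_mul, RingHom.id_apply, smul_eq_mul]

lemma sphereIntegral_apply (p : MvPolynomial ι ℝ) : sphereIntegral b p =
    ∫ y : sphere (0 : E) 1, eval (b.repr (y : E)) p ∂(volume : Measure E).toSphere :=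
  rfl

lemma sphereIntegral_C_mul (a : ℝ) (p : MvPolynomial ι ℝ) :
    sphereIntegral b (C a * p) = a * sphereIntegral b p := by
  rw [← smul_eq_C_mul, map_smul, smul_eq_mul]

lemma sphereIntegral_sum_X_sq_mul (p : MvPolynomial ι ℝ) :
    sphereIntegral b ((∑ i, X i ^ 2) * p) = sphereIntegral b p := by
  refine integral_congr_ae (.of_forall fun y => ?_)
  have hy : ∑ i, b.repr (y : E) i ^ 2 = 1 := by
    rw [← EuclideanSpace.real_norm_sq_eq, b.repr.norm_map, norm_eq_of_mem_sphere, one_pow]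
  simp [hy]

lemma sphereIntegral_monomial_mul [Nontrivial E] (α : ι →₀ ℕ) :
    sphereIntegral b (monomial α 1) *
        ∫ r in Set.Ioi 0, r ^ (Module.finrank ℝ E - 1 + α.degree) * exp (-r ^ 2) =
      ∏ i, gaussianMoment (α i) := by
  have homogeneous (r : ℝ) (y : E) :
      ∏ i, b.repr (r • y) i ^ α i = r ^ α.degree * ∏ i, b.repr y i ^ α i := by
    simp [mul_pow, Finset.prod_mul_distrib, Finset.prod_pow_eq_pow_sum, Finsupp.degree_eq_sum]
  simp only [sphereIntegral_apply, eval_monomial, one_mul, Finsupp.prod_pow]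
  rw [← integral_prod_repr_pow_mul_exp_neg_norm_sq b]
  exact (integral_homogeneous_mul_fun_norm (F := fun y => ∏ i, b.repr y i ^ α i) volume homogeneous
    fun r => exp (-r ^ 2)).symm

lemma two_mul_sphereIntegral_X_mul_pderiv_monomial [Nontrivial E] (α : ι →₀ ℕ) {i j : ι}
    (hij : i ≠ j) :
    2 * sphereIntegral b (X i * pderiv j (monomial α 1)) *
        ∫ r in Set.Ioi 0, r ^ (Module.finrank ℝ E - 1 + α.degree) * exp (-r ^ 2) =
      α i * α j *
        ∏ k, gaussianMoment ((α - Finsupp.single j 1 - Finsupp.single i 1 : ι →₀ ℕ) k) := by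
  rcases Nat.eq_zero_or_pos (α j) with hj | hj
  · simp [hj]
  have degree_eq : (α - Finsupp.single j 1 + Finsupp.single i 1).degree = α.degree := by
    have single_le : Finsupp.single j 1 ≤ α := Finsupp.single_le_iff.2 hj
    have h := congrArg Finsupp.degree (tsub_add_cancel_of_le single_le)
    simpa only [map_add, Finsupp.degree_single] using h
  have product : X i * pderiv j (monomial α (1 : ℝ)) =
      C (α j : ℝ) * monomial (α - Finsupp.single j 1 + Finsupp.single i 1) 1 := by
    rw [pderiv_monomial, X, monomial_mul, C_mul_monomial, add_comm, one_mul, one_mul, mul_one]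
  have ibp := two_mul_prod_gaussianMoment_add_single (α - Finsupp.single j 1) i
  rw [← sphereIntegral_monomial_mul b, degree_eq, Finsupp.tsub_apply,
    Finsupp.single_eq_of_ne hij, tsub_zero] at ibp
  rw [product, sphereIntegral_C_mul]
  linear_combination (α j : ℝ) * ibp

theorem sphereIntegral_X_mul_pderiv (p : MvPolynomial ι ℝ) (i j : ι) :
    sphereIntegral b (X i * pderiv j p) = sphereIntegral b (X j * pderiv i p) := by
  rcases eq_or_ne i j with rfl | hij
  · rfl
  have : Nontrivial E := ⟨b i, 0, b.orthonormal.ne_zero i⟩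
  induction p using MvPolynomial.induction_on' with
  | add p q hp hq => simp only [mul_add, map_add, hp, hq]
  | monomial α a =>
    have h := two_mul_sphereIntegral_X_mul_pderiv_monomial b α hij
    have h' := two_mul_sphereIntegral_X_mul_pderiv_monomial b α hij.symm
    rw [tsub_right_comm] at h'
    have radial_pos :=
      integral_Ioi_pow_mul_exp_neg_sq_pos (Module.finrank ℝ E - 1 + α.degree)
    rw [← mul_one a, ← C_mul_monomial, pderiv_C_mul, pderiv_C_mul, mul_left_comm,
      mul_left_comm (X j), sphereIntegral_C_mul, sphereIntegral_C_mul]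
    congr 1
    refine mul_right_cancel₀ radial_pos.ne' ?_
    linear_combination (h - h') / 2

end SphereIntegral

section ReproducingKernel

variable {E : Type*} [NormedAddCommGroup E] [InnerProductSpace ℝ E] [FiniteDimensional ℝ E]
  [MeasurableSpace E] [BorelSpace E] {ι : Type*} [Fintype ι] (b : OrthonormalBasis ι ℝ E)

open MvPolynomial

lemma pderiv_aeval_X_of_ne {R σ : Type*} [CommSemiring R] {i j : σ} (hij : i ≠ j)
    (q : Polynomial R) : pderiv j (Polynomial.aeval (X i : MvPolynomial σ R) q) = 0 := by
  rw [Derivation.map_aeval, pderiv_X_of_ne hij, smul_zero]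

lemma pderiv_aeval_X_self {R σ : Type*} [CommSemiring R] (i : σ) (q : Polynomial R) :
    pderiv i (Polynomial.aeval (X i : MvPolynomial σ R) q) =
      Polynomial.aeval (X i) (Polynomial.derivative q) := by
  rw [Derivation.map_aeval, pderiv_X_self, smul_eq_mul, mul_one]

lemma sphereIntegral_one_sub_X_sq_mul [DecidableEq ι] (i : ι) (p : MvPolynomial ι ℝ) :
    sphereIntegral b ((1 - X i ^ 2) * p) =
      ∑ j ∈ univ.erase i, sphereIntegral b (X j ^ 2 * p) := by
  rw [sub_mul, one_mul, map_sub, ← sphereIntegral_sum_X_sq_mul, Finset.sum_mul, map_sum,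
    ← Finset.add_sum_erase _ _ (Finset.mem_univ i), add_sub_cancel_left]

theorem isGegenbauerFunctional_sphereIntegral {lam : ℝ} (hι : 2 * lam + 2 = Fintype.card ι)
    (i : ι) :
    IsGegenbauerFunctional lam (sphereIntegral b ∘ₗ (Polynomial.aeval (X i)).toLinearMap) := by
  classical
  intro g
  have rotation (j : ι) (hj : j ∈ univ.erase i) :
      sphereIntegral b (X j ^ 2 * Polynomial.aeval (X i) (Polynomial.derivative g)) =
        sphereIntegral b (X i * Polynomial.aeval (X i) g) := by
    have hij : i ≠ j := (Finset.ne_of_mem_erase hj).symm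
    have h := sphereIntegral_X_mul_pderiv b (X j * Polynomial.aeval (X i) g) i j
    rw [pderiv_mul, pderiv_mul, pderiv_X_self, pderiv_X_of_ne hij.symm, pderiv_aeval_X_self,
      pderiv_aeval_X_of_ne hij, one_mul, mul_zero, add_zero, zero_mul, zero_add] at h
    rw [h, sq, mul_assoc]
  have card_erase : ((univ.erase i).card : ℝ) = 2 * lam + 1 := by
    rw [Finset.card_erase_of_mem (Finset.mem_univ i), Finset.card_univ,
      Nat.cast_pred (Fintype.card_pos_iff.2 ⟨i⟩)]
    linarith
  simp only [LinearMap.comp_apply, AlgHom.toLinearMap_apply, map_mul, map_sub, map_one, map_pow,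
    Polynomial.aeval_X]
  rw [sphereIntegral_one_sub_X_sq_mul, Finset.sum_congr rfl rotation, Finset.sum_const,
    nsmul_eq_mul, card_erase]

lemma sphereIntegral_monomial_of_eq_one {α : ι →₀ ℕ} {j : ι} (hα : α j = 1) (a : ℝ) :
    sphereIntegral b (monomial α a) = 0 := by
  have : Nontrivial E := ⟨b j, 0, b.orthonormal.ne_zero j⟩
  have moment_one : gaussianMoment 1 = 0 := by simpa using two_mul_gaussianMoment_succ 0
  have h := sphereIntegral_monomial_mul b α
  rw [Finset.prod_eq_zero (Finset.mem_univ j) (by rw [hα, moment_one])] at h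
  rw [← mul_one a, ← C_mul_monomial, sphereIntegral_C_mul,
    (mul_eq_zero.1 h).resolve_right (integral_Ioi_pow_mul_exp_neg_sq_pos _).ne', mul_zero]

lemma sphereIntegral_aeval_mul_monomial_of_eq_one {i j : ι} (hij : i ≠ j) {α : ι →₀ ℕ}
    (hα : α j = 1) (q : Polynomial ℝ) :
    sphereIntegral b (Polynomial.aeval (X i) q * monomial α 1) = 0 := by
  induction q using Polynomial.induction_on' with
  | add p q hp hq => rw [map_add, add_mul, map_add, hp, hq, add_zero]
  | monomial n a =>
    rw [Polynomial.aeval_monomial, X_pow_eq_monomial, algebraMap_eq, C_mul_monomial, monomial_mul]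
    refine sphereIntegral_monomial_of_eq_one b (j := j) ?_ _
    rw [Finsupp.add_apply, Finsupp.single_eq_of_ne hij.symm, zero_add, hα]

lemma sphereIntegral_X_sq_mul_aeval_mul_monomial_comm {i j k : ι} (hij : i ≠ j) (hik : i ≠ k)
    (α : ι →₀ ℕ) (q : Polynomial ℝ) :
    (α k + 1) * sphereIntegral b (X j ^ 2 * (Polynomial.aeval (X i) q * monomial α 1)) =
      (α j + 1) * sphereIntegral b (X k ^ 2 * (Polynomial.aeval (X i) q * monomial α 1)) := by
  rcases eq_or_ne j k with rfl | hjk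
  · rfl
  have rotation_field {j k : ι} (hjk : j ≠ k) (hik : i ≠ k) :
      X j * pderiv k (X j * X k * (Polynomial.aeval (X i) q * monomial α (1 : ℝ))) =
        C (α k + 1 : ℝ) * (X j ^ 2 * (Polynomial.aeval (X i) q * monomial α 1)) := by
    have euler := X_mul_pderiv_monomial (i := k) (m := α) (r := (1 : ℝ))
    rw [nsmul_eq_mul] at euler
    simp only [pderiv_mul, pderiv_X_of_ne hjk, pderiv_X_self, pderiv_aeval_X_of_ne hik, map_add,
      map_natCast, map_one]
    linear_combination X j ^ 2 * Polynomial.aeval (X i) q * euler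
  have h := sphereIntegral_X_mul_pderiv b
    (X j * X k * (Polynomial.aeval (X i) q * monomial α 1)) j k
  rwa [rotation_field hjk hik, mul_comm (X j) (X k), rotation_field hjk.symm hij,
    sphereIntegral_C_mul, sphereIntegral_C_mul] at h

lemma sphereIntegral_aeval_mul_monomial_add_single [DecidableEq ι] {i j : ι} (hij : i ≠ j)
    (α : ι →₀ ℕ) (q : Polynomial ℝ) :
    (∑ k ∈ univ.erase i, (α k + 1 : ℝ)) *
        sphereIntegral b (Polynomial.aeval (X i) q * monomial (α + Finsupp.single j 2) 1) =
      (α j + 1) *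
        sphereIntegral b (Polynomial.aeval (X i) ((1 - Polynomial.X ^ 2) * q) * monomial α 1) := by
  have axial : Polynomial.aeval (X i : MvPolynomial ι ℝ) ((1 - Polynomial.X ^ 2) * q) =
      (1 - X i ^ 2) * Polynomial.aeval (X i) q := by
    rw [map_mul, map_sub, map_one, map_pow, Polynomial.aeval_X]
  rw [add_comm α, monomial_single_add, mul_left_comm, axial, mul_assoc,
    sphereIntegral_one_sub_X_sq_mul, Finset.mul_sum, Finset.sum_mul]
  exact Finset.sum_congr rfl fun k hk =>
    sphereIntegral_X_sq_mul_aeval_mul_monomial_comm b hij (Finset.ne_of_mem_erase hk).symm α q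

lemma sphereIntegral_gegenbauerKernel_mul_monomial_single [DecidableEq ι] {lam : ℝ}
    (hlam : 0 < lam) (hι : 2 * lam + 2 = Fintype.card ι) (i : ι) {N m : ℕ} {q : Polynomial ℝ}
    (hN : q.natDegree + m < N) :
    sphereIntegral b (Polynomial.aeval (X i) (gegenbauerKernel lam N * q) *
        monomial (Finsupp.single i m) 1) =
      q.eval 1 * eval (Pi.single i 1) (monomial (Finsupp.single i m) (1 : ℝ)) *
        sphereIntegral b (Polynomial.aeval (X i) (gegenbauerKernel lam N)) := by
  have natDegree_le : (q * Polynomial.X ^ m).natDegree ≤ q.natDegree + m :=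
    Polynomial.natDegree_mul_le_of_le le_rfl (Polynomial.natDegree_X_pow_le m)
  have h := (isGegenbauerFunctional_sphereIntegral b hι i).apply_gegenbauerKernel_mul hlam
    (natDegree_le.trans_lt hN)
  simp only [LinearMap.comp_apply, AlgHom.toLinearMap_apply, Polynomial.eval_mul,
    Polynomial.eval_pow, Polynomial.eval_X, one_pow, mul_one] at h
  rw [← X_pow_eq_monomial, map_pow, eval_X, Pi.single_eq_same, one_pow, mul_one, ← h, ← mul_assoc,
    map_mul _ (_ * _), map_pow, Polynomial.aeval_X]

/-- Off-axis exponents are lowered two at a time at the cost of a factor `1 - X²`, which vanishes at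
the pole; what is left is a polynomial in the axial coordinate. -/
lemma sphereIntegral_gegenbauerKernel_mul_monomial [DecidableEq ι] {lam : ℝ} (hlam : 0 < lam)
    (hι : 2 * lam + 2 = Fintype.card ι) (i : ι) {N : ℕ} (q : Polynomial ℝ) (α : ι →₀ ℕ)
    (hN : q.natDegree + α.degree < N) :
    sphereIntegral b (Polynomial.aeval (X i) (gegenbauerKernel lam N * q) * monomial α 1) =
      q.eval 1 * eval (Pi.single i 1) (monomial α (1 : ℝ)) *
        sphereIntegral b (Polynomial.aeval (X i) (gegenbauerKernel lam N)) := by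
  induction hd : α.degree using Nat.strong_induction_on generalizing α q with
  | _ d ih =>
  by_cases axial : α.support ⊆ {i}
  · obtain ⟨m, rfl⟩ := Finsupp.support_subset_singleton'.1 axial
    rw [Finsupp.degree_single] at hN
    exact sphereIntegral_gegenbauerKernel_mul_monomial_single b hlam hι i hN
  obtain ⟨j, hαj, hji⟩ := Finset.not_subset.1 axial
  rw [Finsupp.mem_support_iff] at hαj
  rw [Finset.mem_singleton] at hji
  have eval_pole : eval (Pi.single i 1) (monomial α (1 : ℝ)) = 0 := by
    rw [eval_monomial, one_mul, Finsupp.prod_pow, Finset.prod_eq_zero (Finset.mem_univ j)]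
    rw [Pi.single_eq_of_ne hji, zero_pow hαj]
  rw [eval_pole, mul_zero, zero_mul]
  rcases eq_or_ne (α j) 1 with hαj_one | hαj_ne_one
  · exact sphereIntegral_aeval_mul_monomial_of_eq_one b (Ne.symm hji) hαj_one _
  have single_le : Finsupp.single j 2 ≤ α := Finsupp.single_le_iff.2 (by omega)
  obtain ⟨γ, rfl⟩ : ∃ γ, α = γ + Finsupp.single j 2 := ⟨_, (tsub_add_cancel_of_le single_le).symm⟩
  rw [map_add, Finsupp.degree_single] at hN hd
  have natDegree_le : ((1 - Polynomial.X ^ 2) * q).natDegree ≤ 2 + q.natDegree :=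
    Polynomial.natDegree_mul_le_of_le (by compute_degree) le_rfl
  have reduced := ih γ.degree (by omega) ((1 - Polynomial.X ^ 2) * q) γ (by omega) rfl
  have reduction := sphereIntegral_aeval_mul_monomial_add_single b (Ne.symm hji) γ
    (gegenbauerKernel lam N * q)
  rw [mul_left_comm (1 - _), reduced] at reduction
  simp only [Polynomial.eval_mul, Polynomial.eval_sub, Polynomial.eval_one, Polynomial.eval_pow,
    Polynomial.eval_X, one_pow, sub_self, zero_mul, mul_zero] at reduction
  refine (mul_eq_zero.1 reduction).resolve_left (Finset.sum_pos (fun k _ => by positivity) ?_).ne'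
  exact ⟨j, Finset.mem_erase.2 ⟨hji, Finset.mem_univ j⟩⟩

theorem sphereIntegral_gegenbauerKernel_mul [DecidableEq ι] {lam : ℝ} (hlam : 0 < lam)
    (hι : 2 * lam + 2 = Fintype.card ι) (i : ι) {N : ℕ} {p : MvPolynomial ι ℝ}
    (hp : p.totalDegree < N) :
    sphereIntegral b (Polynomial.aeval (X i) (gegenbauerKernel lam N) * p) =
      eval (Pi.single i 1) p *
        sphereIntegral b (Polynomial.aeval (X i) (gegenbauerKernel lam N)) := by
  have monomial_case (α : ι →₀ ℕ) (hα : α ∈ p.support) :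
      sphereIntegral b (Polynomial.aeval (X i) (gegenbauerKernel lam N) *
          monomial α (p.coeff α)) =
        eval (Pi.single i 1) (monomial α (p.coeff α)) *
          sphereIntegral b (Polynomial.aeval (X i) (gegenbauerKernel lam N)) := by
    have hN : (1 : Polynomial ℝ).natDegree + α.degree < N := by
      rw [Polynomial.natDegree_one, zero_add]
      exact (le_totalDegree hα).trans_lt hp
    have h := sphereIntegral_gegenbauerKernel_mul_monomial b hlam hι i 1 α hN
    rw [mul_one, Polynomial.eval_one, one_mul] at h
    rw [← mul_one (p.coeff α), ← C_mul_monomial, mul_left_comm, sphereIntegral_C_mul, h, map_mul,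
      eval_C, mul_assoc]
  conv_lhs => rw [p.as_sum, Finset.mul_sum, map_sum, Finset.sum_congr rfl monomial_case]
  rw [← Finset.sum_mul, ← map_sum, ← p.as_sum]

end ReproducingKernel

section ChangeOfCoordinates

open MvPolynomial

lemma totalDegree_aeval_X_le {R σ : Type*} [CommSemiring R] (i : σ) (q : Polynomial R) :
    (Polynomial.aeval (X i : MvPolynomial σ R) q).totalDegree ≤ q.natDegree := by
  rw [Polynomial.aeval_eq_sum_range]
  refine totalDegree_finsetSum_le fun m hm => (totalDegree_smul_le _ _).trans ?_
  rw [X_pow_eq_monomial]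
  refine (totalDegree_monomial_le _ _).trans ?_
  rw [Finsupp.sum_single_index rfl]
  exact Finset.mem_range_succ_iff.1 hm

lemma totalDegree_bind₁_le {R σ τ : Type*} [CommSemiring R] {f : σ → MvPolynomial τ R} {k : ℕ}
    (hf : ∀ i, (f i).totalDegree ≤ k) (p : MvPolynomial σ R) :
    (bind₁ f p).totalDegree ≤ p.totalDegree * k := by
  rw [bind₁, aeval_def, eval₂_eq]
  refine totalDegree_finsetSum_le fun α hα => (totalDegree_mul _ _).trans ?_
  rw [algebraMap_eq, totalDegree_C, zero_add]
  calc (∏ i ∈ α.support, f i ^ α i).totalDegree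
    _ ≤ ∑ i ∈ α.support, (f i ^ α i).totalDegree := totalDegree_finsetProd _ _
    _ ≤ ∑ i ∈ α.support, α i * k :=
      Finset.sum_le_sum fun i _ => (totalDegree_pow _ _).trans (Nat.mul_le_mul_left _ (hf i))
    _ = α.degree * k := (Finset.sum_mul _ _ _).symm
    _ ≤ p.totalDegree * k := Nat.mul_le_mul_right k (le_totalDegree hα)

lemma exists_forall_eval_repr_eq {R M ι κ : Type*} [CommRing R] [AddCommGroup M]
    [Module R M] [Finite ι] [Finite κ] (b : Module.Basis ι R M) (b' : Module.Basis κ R M)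
    (p : MvPolynomial κ R) :
    ∃ p' : MvPolynomial ι R, p'.totalDegree ≤ p.totalDegree ∧
      ∀ y, eval (b.repr y) p' = eval (b'.repr y) p := by
  classical
  have := Fintype.ofFinite ι
  have := Fintype.ofFinite κ
  refine ⟨bind₁ (LinearMap.id.toMvPolynomial b b') p, ?_, fun y => ?_⟩
  · simpa using totalDegree_bind₁_le (LinearMap.id.toMvPolynomial_totalDegree_le b b') p
  · rw [eval, eval₂Hom_bind₁]
    congr 2
    funext k
    exact (LinearMap.id.toMvPolynomial_eval_eq_apply b b' k (b.repr y)).trans (by simp)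

variable {E : Type*} [NormedAddCommGroup E] [InnerProductSpace ℝ E] {ι : Type*} [Fintype ι]

lemma exists_orthonormalBasis_apply_eq (b : OrthonormalBasis ι ℝ E) {x : E} (hx : ‖x‖ = 1) :
    ∃ (b' : OrthonormalBasis ι ℝ E) (i : ι), b' i = x := by
  have : FiniteDimensional ℝ E := b.toBasis.finiteDimensional_of_finite
  have : Nontrivial E := ⟨x, 0, norm_ne_zero_iff.1 (hx ▸ one_ne_zero)⟩
  obtain ⟨i⟩ : Nonempty ι := b.toBasis.index_nonempty
  have orthonormal : Orthonormal ℝ (({i} : Set ι).domRestrict fun _ => x) :=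
    ⟨fun _ => hx, fun j k hjk => absurd (Subsingleton.elim j k) hjk⟩
  obtain ⟨b', hb'⟩ := orthonormal.exists_orthonormalBasis_extension_of_card_eq
    (Module.finrank_eq_card_basis b.toBasis)
  exact ⟨b', i, hb' i rfl⟩

lemma eval_repr_aeval_X (b : OrthonormalBasis ι ℝ E) (i : ι) (q : Polynomial ℝ) (y : E) :
    eval (b.repr y) (Polynomial.aeval (X i) q) = q.eval ⟪b i, y⟫ := by
  rw [← coe_aeval_eq_eval, RingHom.coe_coe, ← Polynomial.aeval_algHom_apply, aeval_X,
    b.repr_apply_apply, Polynomial.coe_aeval_eq_eval]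

lemma exists_forall_eval_repr_eq_eval_inner (b : OrthonormalBasis ι ℝ E) {x : E}
    (hx : ‖x‖ = 1) (q : Polynomial ℝ) :
    ∃ p : MvPolynomial ι ℝ, p.totalDegree ≤ q.natDegree ∧
      ∀ y, eval (b.repr y) p = q.eval ⟪x, y⟫ := by
  obtain ⟨b', i, rfl⟩ := exists_orthonormalBasis_apply_eq b hx
  obtain ⟨p, hp_degree, hp⟩ := exists_forall_eval_repr_eq b.toBasis b'.toBasis
    (Polynomial.aeval (X i) q)
  refine ⟨p, hp_degree.trans (totalDegree_aeval_X_le i q), fun y => ?_⟩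
  rw [← eval_repr_aeval_X]
  exact hp y

end ChangeOfCoordinates

section Extremality

variable {E : Type*} [NormedAddCommGroup E] [InnerProductSpace ℝ E] [FiniteDimensional ℝ E]
  [MeasurableSpace E] [BorelSpace E] {ι : Type*} [Fintype ι] (b : OrthonormalBasis ι ℝ E)

open MvPolynomial

theorem integral_gegenbauerKernel_inner_mul {lam : ℝ} (hlam : 0 < lam)
    (hι : 2 * lam + 2 = Fintype.card ι) {x : E} (hx : ‖x‖ = 1) {N : ℕ} {p : MvPolynomial ι ℝ}
    (hp : p.totalDegree < N) :
    ∫ y : sphere (0 : E) 1, (gegenbauerKernel lam N).eval ⟪x, (y : E)⟫ * eval (b.repr (y : E)) p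
        ∂(volume : Measure E).toSphere =
      eval (b.repr x) p * ∫ y : sphere (0 : E) 1, (gegenbauerKernel lam N).eval ⟪x, (y : E)⟫
        ∂(volume : Measure E).toSphere := by
  classical
  obtain ⟨b', i, rfl⟩ := exists_orthonormalBasis_apply_eq b hx
  obtain ⟨p', hp'_degree, hp'⟩ := exists_forall_eval_repr_eq b'.toBasis b.toBasis p
  have eval_eq (y : E) : eval (b'.repr y) p' = eval (b.repr y) p := hp' y
  have h := sphereIntegral_gegenbauerKernel_mul b' hlam hι i (hp'_degree.trans_lt hp)
  simp only [sphereIntegral_apply, map_mul, eval_repr_aeval_X, eval_eq] at h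
  rw [h, ← eval_eq, b'.repr_self, PiLp.ofLp_single]

lemma sphereIntegral_sq_le_of_mul_eq {p q : MvPolynomial ι ℝ}
    (h : sphereIntegral b (q * p) = sphereIntegral b (q ^ 2)) :
    sphereIntegral b (q ^ 2) ≤ sphereIntegral b (p ^ 2) := by
  have nonneg : 0 ≤ sphereIntegral b ((p - q) ^ 2) := by
    simp only [sphereIntegral_apply, map_pow]
    exact integral_nonneg fun y => sq_nonneg _
  have expand : (p - q) ^ 2 = p ^ 2 - C 2 * (q * p) + q ^ 2 := by
    rw [map_ofNat]
    ring
  rw [expand, map_add, map_sub, sphereIntegral_C_mul, h] at nonneg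
  linarith

lemma exists_extremal_polynomial {lam : ℝ} (hlam : 0 < lam)
    (hι : 2 * lam + 2 = Fintype.card ι) {x : E} (hx : ‖x‖ = 1) (D : ℕ) :
    ∃ p₀ : MvPolynomial ι ℝ, p₀.totalDegree ≤ D ∧
      (∀ y, eval (b.repr y) p₀ = (gegenbauerKernel lam (D + 1)).eval ⟪x, y⟫ /
        (gegenbauerKernel lam (D + 1)).eval 1) ∧
      ∀ p : MvPolynomial ι ℝ, p.totalDegree ≤ D → eval (b.repr x) p = 1 →
        sphereIntegral b (p₀ ^ 2) ≤ sphereIntegral b (p ^ 2) := by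
  set K := gegenbauerKernel lam (D + 1)
  have K_one_ne_zero : K.eval 1 ≠ 0 := (eval_one_gegenbauerKernel_pos hlam D.succ_ne_zero).ne'
  obtain ⟨p₀, hp₀_degree, hp₀⟩ :=
    exists_forall_eval_repr_eq_eval_inner b hx (Polynomial.C (K.eval 1)⁻¹ * K)
  replace hp₀_degree : p₀.totalDegree ≤ D :=
    hp₀_degree.trans <| (Polynomial.natDegree_C_mul_le _ _).trans <|
      natDegree_gegenbauerKernel_le lam (D + 1)
  simp only [Polynomial.eval_mul, Polynomial.eval_C] at hp₀
  have hp₀_pole : eval (b.repr x) p₀ = 1 := by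
    rw [hp₀, real_inner_self_eq_norm_sq, hx, one_pow, inv_mul_cancel₀ K_one_ne_zero]
  refine ⟨p₀, hp₀_degree, fun y => by rw [hp₀, inv_mul_eq_div], fun p hp hp_pole =>
    sphereIntegral_sq_le_of_mul_eq b ?_⟩
  have reproduce {p : MvPolynomial ι ℝ} (hp : p.totalDegree ≤ D) (hp_pole : eval (b.repr x) p = 1) :
      sphereIntegral b (p₀ * p) = sphereIntegral b p₀ := by
    simp only [sphereIntegral_apply, map_mul, hp₀, mul_assoc, integral_const_mul]
    rw [integral_gegenbauerKernel_inner_mul b hlam hι hx (Nat.lt_succ_of_le hp), hp_pole, one_mul]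
  rw [reproduce hp hp_pole, sq, reproduce hp₀_degree hp₀_pole]

theorem scalingFn_localization_general {lam : ℝ} (hlam : 0 < lam)
    (hι : 2 * lam + 2 = Fintype.card ι) (D : ℕ) {c M : ℝ} (hc : 0 < c) (hM : 0 ≤ M) {φ : ℝ → ℝ}
    (hφ : ∀ t, φ t = c * ∑ l ∈ Finset.range (D + 1), (l + lam) / lam * gegenbauer lam l t)
    (x₀ : sphere (0 : E) 1) :
    (∃ p : MvPolynomial ι ℝ, p.totalDegree ≤ D ∧
        ∀ y : sphere (0 : E) 1, eval (b.repr (y : E)) p = φ ⟪(x₀ : E), (y : E)⟫ / φ 1) ∧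
      IsLeast
        {r : ℝ | ∃ p : MvPolynomial ι ℝ, p.totalDegree ≤ D ∧ eval (b.repr (x₀ : E)) p = 1 ∧
          r = √(M * ∫ y : sphere (0 : E) 1, eval (b.repr (y : E)) p ^ 2
            ∂(volume : Measure E).toSphere)}
        (√(M * ∫ y : sphere (0 : E) 1, φ ⟪(x₀ : E), (y : E)⟫ ^ 2
          ∂(volume : Measure E).toSphere) / φ 1) := by
  have φ_eq (t : ℝ) : φ t = c * (gegenbauerKernel lam (D + 1)).eval t := by
    rw [hφ, eval_gegenbauerKernel]
  have φ_one_pos : 0 < φ 1 := by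
    rw [φ_eq]
    exact mul_pos hc (eval_one_gegenbauerKernel_pos hlam D.succ_ne_zero)
  have hx₀ : ‖(x₀ : E)‖ = 1 := norm_eq_of_mem_sphere x₀
  obtain ⟨p₀, hp₀_degree, hp₀, hp₀_min⟩ := exists_extremal_polynomial b hlam hι hx₀ D
  replace hp₀ (y : E) : eval (b.repr y) p₀ = φ ⟪(x₀ : E), y⟫ / φ 1 := by
    rw [hp₀, φ_eq, φ_eq, mul_div_mul_left _ _ hc.ne']
  have value : √(M * ∫ y : sphere (0 : E) 1, φ ⟪(x₀ : E), (y : E)⟫ ^ 2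
      ∂(volume : Measure E).toSphere) / φ 1 = √(M * sphereIntegral b (p₀ ^ 2)) := by
    simp only [sphereIntegral_apply, map_pow, hp₀, div_pow, integral_div]
    rw [← mul_div_assoc, sqrt_div' _ (sq_nonneg _), sqrt_sq φ_one_pos.le]
  refine ⟨⟨p₀, hp₀_degree, fun y => hp₀ y⟩, ?_⟩
  rw [value]
  refine ⟨⟨p₀, hp₀_degree, ?_, by simp only [sphereIntegral_apply, map_pow]⟩, ?_⟩
  · rw [hp₀, real_inner_self_eq_norm_sq, hx₀, one_pow, div_self φ_one_pos.ne']
  rintro _ ⟨p, hp_degree, hp_pole, rfl⟩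
  have h := hp₀_min p hp_degree hp_pole
  rw [sphereIntegral_apply b (p ^ 2)] at h
  simp only [map_pow] at h
  exact sqrt_le_sqrt (mul_le_mul_of_nonneg_left h hM)

end Extremality

/-- Localization of the weighted scaling function `φ_j` around `x₀`: among all spherical
polynomials `f` of degree at most `2^{j−1}−1` with `f(x₀) = 1`, the minimal (normalized)
`L²`-norm is attained by `φ_j(⟨x₀,·⟩)/φ_j(1)`, and the minimal value equals
`‖φ_j(⟨x₀,·⟩)‖/φ_j(1)`; here the surface measure has total mass `Σ_n = 2π^{λ+1}/Γ(λ+1)`,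
`λ = (n−1)/2`. -/
theorem scalingFn_localization (n j : ℕ) (hn : 2 ≤ n) (hj : 1 ≤ j)
    (x₀ : sphere (0 : EuclideanSpace ℝ (Fin (n + 1))) 1) :
    (∃ p : MvPolynomial (Fin (n + 1)) ℝ, p.totalDegree ≤ 2 ^ (j - 1) - 1 ∧
        ∀ y : sphere (0 : EuclideanSpace ℝ (Fin (n + 1))) 1,
          MvPolynomial.eval (fun i => (y : EuclideanSpace ℝ (Fin (n + 1))) i) p =
            scalingFn n j ⟪(x₀ : EuclideanSpace ℝ (Fin (n + 1))),
                (y : EuclideanSpace ℝ (Fin (n + 1)))⟫ / scalingFn n j 1) ∧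
      IsLeast
        { r : ℝ | ∃ p : MvPolynomial (Fin (n + 1)) ℝ,
            p.totalDegree ≤ 2 ^ (j - 1) - 1 ∧
            MvPolynomial.eval (fun i => (x₀ : EuclideanSpace ℝ (Fin (n + 1))) i) p = 1 ∧
            r = Real.sqrt
              ((1 / (2 * π ^ (((n : ℝ) - 1) / 2 + 1) / Real.Gamma (((n : ℝ) - 1) / 2 + 1))) *
                ∫ y : sphere (0 : EuclideanSpace ℝ (Fin (n + 1))) 1,
                  (MvPolynomial.eval (fun i => (y : EuclideanSpace ℝ (Fin (n + 1))) i) p) ^ 2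
                  ∂((volume : Measure (EuclideanSpace ℝ (Fin (n + 1)))).toSphere)) }
        (Real.sqrt
            ((1 / (2 * π ^ (((n : ℝ) - 1) / 2 + 1) / Real.Gamma (((n : ℝ) - 1) / 2 + 1))) *
              ∫ y : sphere (0 : EuclideanSpace ℝ (Fin (n + 1))) 1,
                (scalingFn n j ⟪(x₀ : EuclideanSpace ℝ (Fin (n + 1))),
                    (y : EuclideanSpace ℝ (Fin (n + 1)))⟫) ^ 2
                ∂((volume : Measure (EuclideanSpace ℝ (Fin (n + 1)))).toSphere)) /
          scalingFn n j 1) := by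
  have lam_pos : 0 < ((n : ℝ) - 1) / 2 := half_pos (sub_pos.2 (by exact_mod_cast hn))
  have : 0 < Real.Gamma (((n : ℝ) - 1) / 2 + 1) :=
    Real.Gamma_pos_of_pos (add_pos lam_pos one_pos)
  exact scalingFn_localization_general (EuclideanSpace.basisFun (Fin (n + 1)) ℝ) lam_pos
    (by rw [Fintype.card_fin]; push_cast; ring) (2 ^ (j - 1) - 1)
    (c := 2 ^ (-((n * j : ℕ) : ℝ) / 2)) (by positivity) (by positivity)
    (fun t => by rw [Nat.sub_add_cancel Nat.one_le_two_pow]; rfl) x₀
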